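/- Two LWF chain graphs G and H over the same finite vertex set V are Markov equivalent if and only if they represent the same separations, i.e. the set of probability distributions on ℝ^V satisfying the global Markov property with respect to G equals the set satisfying it with respect to H if and only if, for all pairwise disjoint X, Y, Z ⊆ V, X ⊥_G Y | Z holds exactly when X ⊥_H Y | Z holds. -/

import Mathlib

open Matrix MeasureTheory ProbabilityTheory

attribute [local instance] Classical.propDecidable

noncomputable section

variable {V : Type*}

/-- The submatrix of `S` with rows indexed by `X` and columns indexed by `Y`. -/
def msub (S : Matrix V V ℝ) (X Y : Finset V) : Matrix X Y ℝ :=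
  Matrix.of fun i j => S i.1 j.1

/-- Conditional independence `X ⊥ Y | Z` for a centered Gaussian distribution with
positive definite covariance matrix `S`:  `Σ_{X,Y} − Σ_{X,Z} (Σ_{Z,Z})⁻¹ Σ_{Z,Y} = 0`. -/
def gaussCI [Fintype V] [DecidableEq V] (S : Matrix V V ℝ) (X Y Z : Finset V) : Prop :=
  msub S X Y - msub S X Z * (msub S Z Z)⁻¹ * msub S Z Y = 0

/-- Pairwise disjointness of three sets. -/
def PDisj (X Y Z : Finset V) : Prop :=
  Disjoint X Y ∧ Disjoint X Z ∧ Disjoint Y Z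

/-- Pairwise disjointness of four sets. -/
def PDisj4 (X Y W Z : Finset V) : Prop :=
  Disjoint X Y ∧ Disjoint X W ∧ Disjoint X Z ∧ Disjoint Y W ∧ Disjoint Y Z ∧ Disjoint W Z

/-- A graph with three kinds of edges: undirected (`undir`), solid directed (`solid`,
written `A → B`) and dashed directed (`dashed`, written `A ⇢ B`).  No axioms are imposed. -/
structure PreGraph (V : Type*) where
  undir : V → V → Prop
  solid : V → V → Prop
  dashed : V → V → Prop

namespace PreGraph

variable (G : PreGraph V)

/-- There is an undirected edge between `a` and `b`. -/
def und (a b : V) : Prop := G.undir a b ∨ G.undir b a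

/-- `a` and `b` are adjacent. -/
def adj (a b : V) : Prop :=
  G.und a b ∨ G.solid a b ∨ G.solid b a ∨ G.dashed a b ∨ G.dashed b a

/-- The edge between `a` and `b` is undirected or directed (solid or dashed) from `a` to `b`. -/
def fwd (a b : V) : Prop := G.und a b ∨ G.solid a b ∨ G.dashed a b

/-- A route in `G`: a sequence of nodes `nodes 0, nodes 1, …, nodes len` such that
consecutive nodes are adjacent. -/
structure Route (G : PreGraph V) where
  len : ℕ
  nodes : ℕ → V
  adj_step : ∀ i < len, G.adj (nodes i) (nodes (i + 1))

/-- `c` is a collider node between `a` and `b`:  `a ⇢ c ⇠ b`, `a ⇢ c − b` (in either of the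
two traversal directions) or `a ⇢ c ← b` (in either of the two traversal directions). -/
def colliderTriple (a c b : V) : Prop :=
  (G.dashed a c ∧ G.dashed b c) ∨
  (G.dashed a c ∧ G.und c b) ∨ (G.und a c ∧ G.dashed b c) ∨
  (G.dashed a c ∧ G.solid b c) ∨ (G.solid a c ∧ G.dashed b c)

variable {G} in
/-- The node at position `k` of the route `ρ` is a collider node of `ρ`. -/
def Route.colliderNodeAt (ρ : G.Route) (k : ℕ) : Prop :=
  1 ≤ k ∧ k < ρ.len ∧ G.colliderTriple (ρ.nodes (k - 1)) (ρ.nodes k) (ρ.nodes (k + 1))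

variable {G} in
/-- The positions `p, …, q` of `ρ` form a collider section of `ρ`, i.e. a maximal undirected
subroute `C1 − ⋯ − Cn` of `ρ` such that `A → C1 − ⋯ − Cn ← B` is a subroute of `ρ`. -/
def Route.colliderSectionOcc (ρ : G.Route) (p q : ℕ) : Prop :=
  1 ≤ p ∧ p ≤ q ∧ q + 1 ≤ ρ.len ∧
  (∀ m, p ≤ m → m < q → G.und (ρ.nodes m) (ρ.nodes (m + 1))) ∧
  G.solid (ρ.nodes (p - 1)) (ρ.nodes p) ∧ G.solid (ρ.nodes (q + 1)) (ρ.nodes q)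

variable {G} in
/-- The node at position `k` of `ρ` lies in a collider section of `ρ`. -/
def Route.inColliderSectionAt (ρ : G.Route) (k : ℕ) : Prop :=
  ∃ p q, ρ.colliderSectionOcc p q ∧ p ≤ k ∧ k ≤ q

variable {G} in
/-- The route `ρ` is `Z`-open: (i) all collider nodes are in `Z`, (ii) every collider
section contains some node of `Z`, and (iii) every node which is neither a collider node
nor inside a collider section is outside `Z`. -/
def Route.IsZOpen (ρ : G.Route) (Z : Finset V) : Prop :=
  (∀ k, ρ.colliderNodeAt k → ρ.nodes k ∈ Z) ∧
  (∀ p q, ρ.colliderSectionOcc p q → ∃ m, p ≤ m ∧ m ≤ q ∧ ρ.nodes m ∈ Z) ∧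
  (∀ k ≤ ρ.len, ¬ ρ.colliderNodeAt k → ¬ ρ.inColliderSectionAt k → ρ.nodes k ∉ Z)

variable {G} in
/-- A pure collider route (with at least one edge): every intermediate node is a collider
node or lies in a collider section of the route. -/
def Route.IsPureCollider (ρ : G.Route) : Prop :=
  1 ≤ ρ.len ∧ ∀ k, 0 < k → k < ρ.len → ρ.colliderNodeAt k ∨ ρ.inColliderSectionAt k

/-- Separation `X ⊥_G Y | Z`: there is no `Z`-open route in `G` between a node of `X` and a
node of `Y`. -/
def Sep (X Y Z : Finset V) : Prop :=
  ¬ ∃ ρ : G.Route,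
      ((ρ.nodes 0 ∈ X ∧ ρ.nodes ρ.len ∈ Y) ∨ (ρ.nodes 0 ∈ Y ∧ ρ.nodes ρ.len ∈ X)) ∧
      ρ.IsZOpen Z

section Finite

variable [Fintype V] [DecidableEq V]

/-- The fathers of `X`: nodes `b` with `b → a` in `G` for some `a ∈ X`. -/
def fa (X : Finset V) : Finset V := Finset.univ.filter fun b => ∃ a ∈ X, G.solid b a

/-- The mothers of `X`: nodes `b` with `b ⇢ a` in `G` for some `a ∈ X`. -/
def mo (X : Finset V) : Finset V := Finset.univ.filter fun b => ∃ a ∈ X, G.dashed b a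

/-- The parents of `X`. -/
def pa (X : Finset V) : Finset V := G.fa X ∪ G.mo X

/-- The neighbors of `X`: nodes `b` with `b − a` in `G` for some `a ∈ X`. -/
def nb (X : Finset V) : Finset V := Finset.univ.filter fun b => ∃ a ∈ X, G.und b a

/-- There is a descending route from `a` to `b`: all edges undirected or directed in the
direction of travel, containing at least one directed edge. -/
def descends (a b : V) : Prop :=
  ∃ (n : ℕ) (f : ℕ → V), f 0 = a ∧ f n = b ∧ (∀ i < n, G.fwd (f i) (f (i + 1))) ∧
    ∃ i < n, G.solid (f i) (f (i + 1)) ∨ G.dashed (f i) (f (i + 1))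

/-- The non-descendants of `X`. -/
def nd (X : Finset V) : Finset V := Finset.univ.filter fun b => ¬ ∃ a ∈ X, G.descends a b

/-- Connectivity by undirected routes. -/
def uconn : V → V → Prop := Relation.ReflTransGen G.und

/-- The chain component containing `i`. -/
def cc (i : V) : Finset V := Finset.univ.filter fun j => G.uconn i j

/-- The set of chain components of `G`. -/
def ccs : Finset (Finset V) := Finset.univ.image G.cc

/-- The nodes incident to some edge of `G`. -/
def verts : Finset V := Finset.univ.filter fun a => ∃ b, G.adj a b

/-- `π` is a topological ordering of the chain components: it is constant on components and
increases along directed edges. -/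
def IsTopoOrder (π : V → ℕ) : Prop :=
  (∀ a b, G.uconn a b → π a = π b) ∧ ∀ a b, G.solid a b ∨ G.dashed a b → π a < π b

/-- Equation 1: for every topological ordering of the chain components, each component `K`
is independent of the preceding components minus `Pa(K)` given `Pa(K)`. -/
def eq1 (S : Matrix V V ℝ) : Prop :=
  ∀ π : V → ℕ, G.IsTopoOrder π → ∀ i : V,
    gaussCI S (G.cc i) ((Finset.univ.filter fun b => π b < π i) \ G.pa (G.cc i))
      (G.pa (G.cc i))

/-- The regression coefficients `β_K = Σ_{K,Pa(K)} (Σ_{Pa(K),Pa(K)})⁻¹`. -/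
def beta (S : Matrix V V ℝ) (K : Finset V) : Matrix K (G.pa K) ℝ :=
  msub S K (G.pa K) * (msub S (G.pa K) (G.pa K))⁻¹

/-- The conditional covariance matrix `Λ_K`. -/
def lam (S : Matrix V V ℝ) (K : Finset V) : Matrix K K ℝ :=
  msub S K K - msub S K (G.pa K) * (msub S (G.pa K) (G.pa K))⁻¹ * msub S (G.pa K) K

/-- The precision matrix `Ω = (Σ_{K ∪ Pa(K), K ∪ Pa(K)})⁻¹`. -/
def om (S : Matrix V V ℝ) (K : Finset V) : Matrix ↥(K ∪ G.pa K) ↥(K ∪ G.pa K) ℝ :=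
  (msub S (K ∪ G.pa K) (K ∪ G.pa K))⁻¹

/-- Equation 6: `(β_K)_{i,j} = 0` for all `i ∈ K` and `j ∈ Mo(K) ∖ Mo(i)`. -/
def eq6 (S : Matrix V V ℝ) : Prop :=
  ∀ K ∈ G.ccs, ∀ i (hi : i ∈ K), ∀ j (hj : j ∈ G.pa K),
    j ∈ G.mo K → j ∉ G.mo {i} → G.beta S K ⟨i, hi⟩ ⟨j, hj⟩ = 0

/-- Equation 7: `Ω_{i,j} = 0` for all `i ∈ K` and `j ∈ Fa(K) ∖ Fa(i)`. -/
def eq7 (S : Matrix V V ℝ) : Prop :=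
  ∀ K ∈ G.ccs, ∀ i (hi : i ∈ K), ∀ j (hj : j ∈ G.pa K),
    j ∈ G.fa K → j ∉ G.fa {i} →
    G.om S K ⟨i, Finset.mem_union_left _ hi⟩ ⟨j, Finset.mem_union_right _ hj⟩ = 0

/-- Equation 8: `(Λ_K⁻¹)_{i,j} = 0` for all `i ∈ K` and `j ∈ K ∖ ({i} ∪ Ne(i))`. -/
def eq8 (S : Matrix V V ℝ) : Prop :=
  ∀ K ∈ G.ccs, ∀ i (hi : i ∈ K), ∀ j (hj : j ∈ K),
    j ≠ i → j ∉ G.nb {i} → (G.lam S K)⁻¹ ⟨i, hi⟩ ⟨j, hj⟩ = 0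

/-- `p` satisfies Equation 1 and the zero restrictions of Equations 6–8 w.r.t. `G`. -/
def eqs (S : Matrix V V ℝ) : Prop := G.eq1 S ∧ G.eq6 S ∧ G.eq7 S ∧ G.eq8 S

/-- The global Markov property with respect to `G`, for an abstract ternary
(conditional-independence) relation `I`. -/
def globalMP (I : Finset V → Finset V → Finset V → Prop) : Prop :=
  ∀ X Y Z : Finset V, PDisj X Y Z → G.Sep X Y Z → I X Y Z

/-- The block-recursive Markov property (B1)–(B3) with respect to `G`. -/
def blockRecMP (I : Finset V → Finset V → Finset V → Prop) : Prop :=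
  ∀ K ∈ G.ccs, ∀ i ∈ K,
    I {i} (((G.nd K \ K) \ G.fa K) \ G.mo {i}) (G.fa K ∪ G.mo {i}) ∧
    I {i} (((G.nd K \ K) \ G.fa {i}) \ G.mo K) ((K \ {i}) ∪ G.fa {i} ∪ G.mo K) ∧
    ∀ j ∈ K, j ≠ i → j ∉ G.nb {i} → I {i} {j} ((K \ {i, j}) ∪ G.pa K)

/-- The pairwise Markov property (P1)–(P2) with respect to `G`. -/
def pairwiseMP (I : Finset V → Finset V → Finset V → Prop) : Prop :=
  ∀ i j : V, i ≠ j → ¬ G.adj i j → ∀ K ∈ G.ccs, i ∈ K →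
    (j ∈ ((G.nd {i} \ K) \ G.fa K) \ G.mo {i} → I {i} {j} ((G.nd {i} \ K) \ {j})) ∧
    (j ∈ ((G.nd {i} \ {i}) \ G.fa {i}) \ G.mo K → I {i} {j} (G.nd {i} \ {i, j}))

/-- The local Markov property (L1)–(L2) with respect to `G`. -/
def localMP (I : Finset V → Finset V → Finset V → Prop) : Prop :=
  ∀ K ∈ G.ccs, ∀ i ∈ K,
    I {i} (((G.nd {i} \ K) \ G.fa K) \ G.mo {i}) (G.fa K ∪ G.mo {i}) ∧
    I {i} ((((G.nd {i} \ {i}) \ G.pa {i}) \ G.nb {i}) \ G.mo (G.nb {i}))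
      (G.pa {i} ∪ G.nb {i} ∪ G.mo (G.nb {i}))

/-- The subgraph `G^U`: it keeps the edge `A ⊸ B` (with its type and orientation) iff `G`
has a route `A ⊸ B ⊸ ⋯ ⊸ C` with `C ∈ U`, all edges undirected or directed in the
direction of travel, and no subroute `R ⇢ S − T`. -/
def goodFrom (U : Finset V) (a b : V) : Prop :=
  ∃ (f : ℕ → V) (n : ℕ), 1 ≤ n ∧ f 0 = a ∧ f 1 = b ∧ f n ∈ U ∧
    (∀ i < n, G.fwd (f i) (f (i + 1))) ∧
    ∀ i, i + 2 ≤ n → ¬ (G.dashed (f i) (f (i + 1)) ∧ G.und (f (i + 1)) (f (i + 2)))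

/-- The graph `G^U`. -/
def derived (U : Finset V) : PreGraph V where
  undir a b := G.undir a b ∧ G.goodFrom U a b
  solid a b := G.solid a b ∧ G.goodFrom U a b
  dashed a b := G.dashed a b ∧ G.goodFrom U a b

/-- The set `Y'` used in Lemmas 2 and 3:
`Y' = {B' ∈ V(G^{X∪Y∪Z}) ∖ (X ∪ Z) : X ⊥_{G^{X∪Y∪Z}} B' | Z}`. -/
def derivedYp (X Y Z : Finset V) : Finset V :=
  ((G.derived (X ∪ Y ∪ Z)).verts \ (X ∪ Z)).filter fun b =>
    (G.derived (X ∪ Y ∪ Z)).Sep X {b} Z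

/-- The set `X' = V(G^{X∪Y∪Z}) ∖ (Y' ∪ Z)` used in Lemmas 2 and 3. -/
def derivedXp (X Y Z : Finset V) : Finset V :=
  (G.derived (X ∪ Y ∪ Z)).verts \ (G.derivedYp X Y Z ∪ Z)

end Finite

end PreGraph

/-- A chain graph: at most one edge between any pair of distinct nodes (undirected, solid
directed, or dashed directed) and no semidirected cycles. -/
structure ChainGraph (V : Type*) extends PreGraph V where
  undir_symm : ∀ a b, toPreGraph.undir a b → toPreGraph.undir b a
  undir_irrefl : ∀ a, ¬ toPreGraph.undir a a
  solid_irrefl : ∀ a, ¬ toPreGraph.solid a a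
  dashed_irrefl : ∀ a, ¬ toPreGraph.dashed a a
  undir_not_solid : ∀ a b, toPreGraph.undir a b → ¬ toPreGraph.solid a b
  undir_not_dashed : ∀ a b, toPreGraph.undir a b → ¬ toPreGraph.dashed a b
  solid_not_solid : ∀ a b, toPreGraph.solid a b → ¬ toPreGraph.solid b a
  solid_not_dashed : ∀ a b, toPreGraph.solid a b → ¬ toPreGraph.dashed a b
  solid_not_dashed_rev : ∀ a b, toPreGraph.solid a b → ¬ toPreGraph.dashed b a
  dashed_not_dashed : ∀ a b, toPreGraph.dashed a b → ¬ toPreGraph.dashed b a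
  no_semidirected_cycle : ¬ ∃ (f : ℕ → V) (n : ℕ), 1 ≤ n ∧ f n = f 0 ∧
    (toPreGraph.solid (f 0) (f 1) ∨ toPreGraph.dashed (f 0) (f 1)) ∧
    ∀ i < n, toPreGraph.fwd (f i) (f (i + 1))

namespace ChainGraph

variable (G : ChainGraph V)

/-- An LWF chain graph: no dashed directed edges. -/
def IsLWF : Prop := ∀ a b, ¬ G.toPreGraph.dashed a b

/-- An AMP chain graph: no solid directed edges. -/
def IsAMP : Prop := ∀ a b, ¬ G.toPreGraph.solid a b

/-- A unified chain graph: `Fa(K) ∩ Mo(K) = ∅` for every chain component `K`. -/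
def IsUCG [Fintype V] [DecidableEq V] : Prop :=
  ∀ K ∈ G.toPreGraph.ccs, Disjoint (G.toPreGraph.fa K) (G.toPreGraph.mo K)

end ChainGraph


/-- The AMP chain graph obtained from `G` by deleting every solid directed edge. -/
def ChainGraph.dropSolid (G : ChainGraph V) : ChainGraph V where
  undir := G.toPreGraph.undir
  solid _ _ := False
  dashed := G.toPreGraph.dashed
  undir_symm := G.undir_symm
  undir_irrefl := G.undir_irrefl
  solid_irrefl _ h := h
  dashed_irrefl := G.dashed_irrefl
  undir_not_solid _ _ _ h := h
  undir_not_dashed := G.undir_not_dashed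
  solid_not_solid _ _ h := h.elim
  solid_not_dashed _ _ h := h.elim
  solid_not_dashed_rev _ _ h := h.elim
  dashed_not_dashed := G.dashed_not_dashed
  no_semidirected_cycle := fun ⟨f, n, hn, hcyc, hstart, hsteps⟩ =>
    G.no_semidirected_cycle ⟨f, n, hn, hcyc, Or.inr (hstart.resolve_left id),
      fun i hi => (hsteps i hi).imp id (Or.imp False.elim id)⟩

/-- The restriction of `ω : V → ℝ` to the coordinates in `S`. -/
def marg (S : Finset V) : (V → ℝ) → (S → ℝ) := fun ω s => ω s.1

lemma marg_measurable (S : Finset V) : Measurable (marg (V := V) S) :=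
  measurable_pi_lambda _ fun s => measurable_pi_apply s.1

/-- Conditional independence of the coordinate tuples indexed by `X` and `Y` given the
coordinate tuple indexed by `Z`, for a distribution `μ` on `ℝ^V`. -/
def mCI [Fintype V] (μ : Measure (V → ℝ)) [IsFiniteMeasure μ] (X Y Z : Finset V) : Prop :=
  CondIndepFun (MeasurableSpace.comap (marg Z) inferInstance) ((marg_measurable Z).comap_le)
    (marg X) (marg Y) μ

/-- A probability distribution `μ` on `ℝ^V` satisfies the global Markov property with
respect to `G`. -/
def measGlobalMarkov [Fintype V] [DecidableEq V] (G : PreGraph V) (μ : Measure (V → ℝ))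
    [IsFiniteMeasure μ] : Prop :=
  ∀ X Y Z : Finset V, PDisj X Y Z → G.Sep X Y Z → mCI μ X Y Z

/-- A graphoid over `V`: a ternary relation on pairwise disjoint subsets of `V` satisfying
symmetry, decomposition, weak union, contraction and intersection. -/
structure Graphoid (V : Type*) [DecidableEq V] where
  rel : Finset V → Finset V → Finset V → Prop
  symmetry : ∀ X Y Z : Finset V, PDisj X Y Z → rel X Y Z → rel Y X Z
  decomposition : ∀ X Y W Z : Finset V, PDisj4 X Y W Z → rel X (Y ∪ W) Z → rel X Y Z
  weakUnion : ∀ X Y W Z : Finset V, PDisj4 X Y W Z → rel X (Y ∪ W) Z → rel X Y (Z ∪ W)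
  contraction : ∀ X Y W Z : Finset V, PDisj4 X Y W Z →
    rel X Y (Z ∪ W) → rel X W Z → rel X (Y ∪ W) Z
  intersection : ∀ X Y W Z : Finset V, PDisj4 X Y W Z →
    rel X Y (Z ∪ W) → rel X W (Z ∪ Y) → rel X (Y ∪ W) Z

/-- The conditional variance `Σ_{a,a|B} = Σ_{a,a} − Σ_{a,B} (Σ_{B,B})⁻¹ Σ_{B,a}`. -/
def condVar [Fintype V] [DecidableEq V] (S : Matrix V V ℝ) (a : V) (B : Finset V) : ℝ :=
  S a a - ∑ b₁ : B, ∑ b₂ : B, S a b₁.1 * (msub S B B)⁻¹ b₁ b₂ * S b₂.1 a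

section AtomicConditionalIndependence

lemma condExp_apply_mul_real {Ω : Type*} {m m₀ : MeasurableSpace Ω} (hm : m ≤ m₀)
    (μ : Measure Ω) [IsFiniteMeasure μ] {T E : Set Ω} (hT : MeasurableSet[m] T)
    (hE : MeasurableSet E) (x : Ω) (hc : ∀ y ∈ T, (μ⟦E | m⟧) y = (μ⟦E | m⟧) x) :
    (μ⟦E | m⟧) x * μ.real T = μ.real (T ∩ E) := by
  have h := setIntegral_condExp hm (μ := μ) (f := E.indicator fun _ => (1 : ℝ))
    ((integrable_const _).indicator hE) hT
  rw [setIntegral_congr_fun (hm _ hT) hc, setIntegral_const, setIntegral_indicator hE,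
    setIntegral_const] at h
  simpa [mul_comm] using h

lemma eq_of_measurable_comap {α β : Type*} [MeasurableSpace β] {f : α → β} {Q : α → ℝ}
    (hQ : Measurable[MeasurableSpace.comap f inferInstance] Q) {x y : α} (h : f y = f x) :
    Q y = Q x := by
  obtain ⟨W, -, hW⟩ := hQ (measurableSet_singleton (Q x))
  have hx : x ∈ f ⁻¹' W := by rw [hW]; rfl
  have hy : y ∈ f ⁻¹' W := by rw [Set.mem_preimage, h]; exact hx
  rw [hW] at hy
  exact hy

/-- For an atomic distribution, conditional independence is the product rule on the fibers of
the conditioning tuple over the atoms. -/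
lemma mCI_iff_of_atomic [Fintype V] (μ : Measure (V → ℝ)) [IsFiniteMeasure μ]
    (hμ : ∀ᵐ x ∂μ, μ {x} ≠ 0) (A B S : Finset V) :
    mCI μ A B S ↔ ∀ x, μ {x} ≠ 0 → ∀ s t, MeasurableSet s → MeasurableSet t →
      μ.real ({y | marg S y = marg S x} ∩ (marg A ⁻¹' s ∩ marg B ⁻¹' t)) *
        μ.real {y | marg S y = marg S x} =
      μ.real ({y | marg S y = marg S x} ∩ marg A ⁻¹' s) *
        μ.real ({y | marg S y = marg S x} ∩ marg B ⁻¹' t) := by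
  have key : ∀ x E, MeasurableSet E →
      (μ⟦E | MeasurableSpace.comap (marg S) inferInstance⟧) x *
        μ.real {y | marg S y = marg S x} = μ.real ({y | marg S y = marg S x} ∩ E) := by
    intro x E hE
    refine condExp_apply_mul_real (marg_measurable S).comap_le μ
      ⟨{marg S x}, measurableSet_singleton _, rfl⟩ hE x fun y hy => ?_
    exact eq_of_measurable_comap stronglyMeasurable_condExp.measurable hy
  have hpos : ∀ x, μ {x} ≠ 0 → μ.real {y | marg S y = marg S x} ≠ 0 := by
    intro x hx h
    rw [measureReal_eq_zero_iff] at h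
    exact hx (measure_mono_null (by simp) h)
  rw [mCI, condIndepFun_iff_condExp_inter_preimage_eq_mul (marg_measurable A)
    (marg_measurable B)]
  constructor
  · intro h x hx s t hs ht
    have hx' := h s t hs ht
    have hval : (μ⟦marg A ⁻¹' s ∩ marg B ⁻¹' t |
        MeasurableSpace.comap (marg S) inferInstance⟧) x =
        (μ⟦marg A ⁻¹' s | MeasurableSpace.comap (marg S) inferInstance⟧) x *
        (μ⟦marg B ⁻¹' t | MeasurableSpace.comap (marg S) inferInstance⟧) x := by
      by_contra hne
      exact hx (measure_mono_null (Set.singleton_subset_iff.2 hne) hx')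
    rw [← key x _ ((marg_measurable A hs).inter (marg_measurable B ht)),
      ← key x _ (marg_measurable A hs), ← key x _ (marg_measurable B ht), hval]
    ring
  · intro h s t hs ht
    filter_upwards [hμ] with x hx
    have hx' := h x hx s t hs ht
    rw [← key x _ ((marg_measurable A hs).inter (marg_measurable B ht)),
      ← key x _ (marg_measurable A hs), ← key x _ (marg_measurable B ht)] at hx'
    have h0 := hpos x hx
    exact mul_right_cancel₀ h0 (mul_right_cancel₀ h0 (by linear_combination hx'))

variable {Ω : Type*} [Fintype Ω] [MeasurableSpace Ω] [DiscreteMeasurableSpace Ω]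

/-- The law of `X` when its argument is uniformly distributed. -/
def uniformLaw (X : Ω → V → ℝ) : Measure (V → ℝ) := (uniformOn Set.univ).map X

lemma uniformLaw_real (X : Ω → V → ℝ) {s : Set (V → ℝ)} (hs : MeasurableSet s) :
    (uniformLaw X).real s = (X ⁻¹' s).ncard / Fintype.card Ω := by
  rw [uniformLaw, map_measureReal_apply Measurable.of_discrete hs, Measure.real,
    uniformOn_univ, Measure.count_apply_finite _ (Set.toFinite _), ENNReal.toReal_div,
    Set.ncard_eq_toFinset_card _ (Set.toFinite _)]
  simp

variable [Nonempty Ω]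

instance (X : Ω → V → ℝ) : IsProbabilityMeasure (uniformLaw X) := by
  have : IsProbabilityMeasure (uniformOn (Set.univ : Set Ω)) :=
    isProbabilityMeasure_uniformOn Set.finite_univ Set.univ_nonempty
  exact Measure.isProbabilityMeasure_map Measurable.of_discrete.aemeasurable

lemma uniformLaw_singleton_ne_zero_iff [Fintype V] (X : Ω → V → ℝ) (x : V → ℝ) :
    uniformLaw X {x} ≠ 0 ↔ ∃ ω, X ω = x := by
  rw [← measureReal_ne_zero_iff, uniformLaw_real X (measurableSet_singleton x)]
  simp [Set.ncard_eq_zero (Set.toFinite _), Set.eq_empty_iff_forall_notMem]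

lemma uniformLaw_atomic [Fintype V] (X : Ω → V → ℝ) :
    ∀ᵐ x ∂uniformLaw X, uniformLaw X {x} ≠ 0 := by
  simp only [uniformLaw_singleton_ne_zero_iff]
  rw [uniformLaw]
  refine (ae_map_iff Measurable.of_discrete.aemeasurable ?_).2
    (Filter.Eventually.of_forall fun ω => ⟨ω, rfl⟩)
  exact (Set.finite_range X).measurableSet

lemma mCI_uniformLaw_iff [Fintype V] (X : Ω → V → ℝ) (A B S : Finset V) :
    mCI (uniformLaw X) A B S ↔ ∀ ω₀, ∀ s t, MeasurableSet s → MeasurableSet t →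
      {ω | marg S (X ω) = marg S (X ω₀) ∧ marg A (X ω) ∈ s ∧ marg B (X ω) ∈ t}.ncard *
        {ω | marg S (X ω) = marg S (X ω₀)}.ncard =
      {ω | marg S (X ω) = marg S (X ω₀) ∧ marg A (X ω) ∈ s}.ncard *
        {ω | marg S (X ω) = marg S (X ω₀) ∧ marg B (X ω) ∈ t}.ncard := by
  have hT : ∀ x : V → ℝ, MeasurableSet {y | marg S y = marg S x} := fun x =>
    marg_measurable S (measurableSet_singleton (marg S x))
  have hc : (Fintype.card Ω : ℝ) ≠ 0 := Nat.cast_ne_zero.2 Fintype.card_ne_zero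
  simp only [mCI_iff_of_atomic _ (uniformLaw_atomic X), uniformLaw_singleton_ne_zero_iff,
    forall_exists_index, forall_apply_eq_imp_iff]
  refine forall_congr' fun ω₀ => forall_congr' fun s => forall_congr' fun t =>
    forall_congr' fun hs => forall_congr' fun ht => ?_
  rw [uniformLaw_real X ((hT _).inter ((marg_measurable A hs).inter (marg_measurable B ht))),
    uniformLaw_real X (hT _), uniformLaw_real X ((hT _).inter (marg_measurable A hs)),
    uniformLaw_real X ((hT _).inter (marg_measurable B ht)), div_mul_div_comm,
    div_mul_div_comm, div_left_inj' (mul_ne_zero hc hc)]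
  norm_cast

/-- If outcomes agreeing on `S` can be recombined, taking the `A`-part of one and the `B`-part
of the other, then `A` and `B` are conditionally independent given `S`. -/
lemma mCI_uniformLaw_of_mix [Fintype V] (X : Ω → V → ℝ) (A B S : Finset V)
    (mix : Ω → Ω → Ω) (hinv : ∀ ω ω', mix (mix ω ω') (mix ω' ω) = ω)
    (hmix : ∀ ω ω', marg S (X ω) = marg S (X ω') → marg S (X (mix ω ω')) = marg S (X ω) ∧
      marg A (X (mix ω ω')) = marg A (X ω) ∧ marg B (X (mix ω ω')) = marg B (X ω')) :
    mCI (uniformLaw X) A B S := by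
  rw [mCI_uniformLaw_iff]
  intro ω₀ s t _ _
  rw [← Set.ncard_prod, ← Set.ncard_prod]
  refine Set.ncard_congr (fun p _ => (mix p.1 p.2, mix p.2 p.1)) ?_ ?_ ?_
  · rintro ⟨ω, ω'⟩ ⟨⟨h1, h2, h3⟩, h4⟩
    simp only [Set.mem_ofPred_eq] at h1 h2 h3 h4
    obtain ⟨a1, a2, a3⟩ := hmix ω ω' (h1.trans h4.symm)
    obtain ⟨b1, b2, b3⟩ := hmix ω' ω (h4.trans h1.symm)
    exact ⟨⟨a1.trans h1, by rwa [a2]⟩, ⟨b1.trans h4, by rwa [b3]⟩⟩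
  · rintro ⟨a, b⟩ ⟨c, d⟩ _ _ h
    simp only [Prod.mk.injEq] at h ⊢
    exact ⟨by rw [← hinv a b, h.1, h.2, hinv], by rw [← hinv b a, h.1, h.2, hinv]⟩
  · rintro ⟨ω, ω'⟩ ⟨⟨h1, h2⟩, h3, h4⟩
    obtain ⟨a1, a2, a3⟩ := hmix ω ω' (h1.trans h3.symm)
    obtain ⟨b1, b2, b3⟩ := hmix ω' ω (h3.trans h1.symm)
    refine ⟨(mix ω ω', mix ω' ω), ⟨⟨a1.trans h1, by rwa [a2], by rwa [a3]⟩, b1.trans h3⟩, ?_⟩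
    simp [hinv]

end AtomicConditionalIndependence

namespace PreGraph.Route

variable {G : PreGraph V} (ρ : G.Route)

/-- The subroute of `ρ` between the positions `p` and `q`. -/
def sub (p q : ℕ) (hq : q ≤ ρ.len) : G.Route where
  len := q - p
  nodes k := ρ.nodes (p + k)
  adj_step i hi := ρ.adj_step (p + i) (by omega)

lemma sub_colliderSectionOcc_iff {p q : ℕ} (hq : q ≤ ρ.len) (a c : ℕ) :
    (ρ.sub p q hq).colliderSectionOcc a c ↔
      1 ≤ a ∧ p + c + 1 ≤ q ∧ ρ.colliderSectionOcc (p + a) (p + c) := by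
  simp only [colliderSectionOcc, sub]
  constructor
  · rintro ⟨h1, h2, h3, h4, h5, h6⟩
    refine ⟨h1, by omega, by omega, by omega, by omega, fun m hm hm' => ?_, ?_, h6⟩
    · have := h4 (m - p) (by omega) (by omega)
      rwa [← Nat.add_assoc, Nat.add_sub_cancel' (by omega)] at this
    · rwa [← Nat.add_sub_assoc h1] at h5
  · rintro ⟨h1, h2, -, h3, -, h4, h5, h6⟩
    refine ⟨h1, by omega, by omega, fun m hm hm' => h4 (p + m) (by omega) (by omega), ?_, h6⟩
    rwa [Nat.add_sub_assoc h1] at h5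

/-- The number of collider sections of `ρ` that end strictly before position `k`. -/
def bitIndex (k : ℕ) : ℕ :=
  Nat.count (fun j => ρ.inColliderSectionAt j ∧ ¬ ρ.inColliderSectionAt (j + 1)) k

/-- A bit sequence spread along `ρ`: each maximal stretch outside the collider sections carries
one bit, and each collider section carries the sum of the bits of the two adjacent stretches. -/
def signal (ω : ℕ → Bool) (k : ℕ) : Bool :=
  if ρ.inColliderSectionAt k then xor (ω (ρ.bitIndex k)) (ω (ρ.bitIndex k + 1))
  else ω (ρ.bitIndex k)

lemma bitIndex_mono : Monotone ρ.bitIndex := Nat.count_monotone _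

lemma bitIndex_le (k : ℕ) : ρ.bitIndex k ≤ k := Nat.count_le _

lemma bitIndex_succ_of_end {k : ℕ} (h : ρ.inColliderSectionAt k)
    (h' : ¬ ρ.inColliderSectionAt (k + 1)) : ρ.bitIndex (k + 1) = ρ.bitIndex k + 1 := by
  simp [bitIndex, Nat.count_succ, h, h']

lemma bitIndex_succ_of_not_end {k : ℕ}
    (h : ¬ (ρ.inColliderSectionAt k ∧ ¬ ρ.inColliderSectionAt (k + 1))) :
    ρ.bitIndex (k + 1) = ρ.bitIndex k := by
  simp only [bitIndex, Nat.count_succ, if_neg h, Nat.add_zero]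

lemma bitIndex_lt {k m : ℕ} (hk : ρ.inColliderSectionAt k) (hm : ¬ ρ.inColliderSectionAt m)
    (hkm : k ≤ m) : ρ.bitIndex k < ρ.bitIndex m := by
  induction m, hkm using Nat.le_induction with
  | base => exact absurd hk hm
  | succ m hkm ih =>
    by_cases h : ρ.inColliderSectionAt m
    · rw [ρ.bitIndex_succ_of_end h hm]
      exact Nat.lt_succ_of_le (ρ.bitIndex_mono hkm)
    · exact (ih h).trans_le (ρ.bitIndex_mono m.le_succ)

variable {ρ}

lemma colliderSectionOcc.inColliderSectionAt {p q m : ℕ} (h : ρ.colliderSectionOcc p q)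
    (hp : p ≤ m) (hq : m ≤ q) : ρ.inColliderSectionAt m := ⟨p, q, h, hp, hq⟩

variable (ρ) in
/-- Some position of `ρ` carrying only bit `i` has its node in `S`. -/
def BitKnown (S : Finset V) (i : ℕ) : Prop :=
  ∃ k ≤ ρ.len, ¬ ρ.inColliderSectionAt k ∧ ρ.bitIndex k = i ∧ ρ.nodes k ∈ S

variable (ρ) in
/-- Some position of `ρ` carrying the sum of the bits `i` and `i + 1` has its node in `S`. -/
def SumKnown (S : Finset V) (i : ℕ) : Prop :=
  ∃ k ≤ ρ.len, ρ.inColliderSectionAt k ∧ ρ.bitIndex k = i ∧ ρ.nodes k ∈ S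

variable (ρ) in
/-- The bits `i` and `j` determine each other given `S`, but are not determined by `S`. -/
def Linked (S : Finset V) (i j : ℕ) : Prop :=
  ∀ t, (i ≤ t ∧ t < j ∨ j ≤ t ∧ t < i) →
    ¬ ρ.BitKnown S t ∧ ¬ ρ.BitKnown S (t + 1) ∧ ρ.SumKnown S t

lemma Linked.refl (S : Finset V) (i : ℕ) : ρ.Linked S i i := fun t ht => by omega

lemma Linked.symm {S : Finset V} {i j : ℕ} (h : ρ.Linked S i j) : ρ.Linked S j i :=
  fun t ht => h t ht.symm

lemma Linked.trans {S : Finset V} {i j k : ℕ} (h : ρ.Linked S i j) (h' : ρ.Linked S j k) :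
    ρ.Linked S i k := fun t ht => by
  by_cases hj : i ≤ t ∧ t < j ∨ j ≤ t ∧ t < i
  · exact h t hj
  · exact h' t (by omega)

lemma linked_succ {S : Finset V} {i : ℕ} (h : ¬ ρ.BitKnown S i) (h' : ¬ ρ.BitKnown S (i + 1))
    (hs : ρ.SumKnown S i) : ρ.Linked S i (i + 1) := fun t ht => by
  obtain rfl : t = i := by omega
  exact ⟨h, h', hs⟩

variable (ρ) in
/-- The signal at position `p` involves bit `i`, which is not determined by `S`, and the signal
itself is not read off at a node of `S` in the same collider section. -/
def Exposes (S : Finset V) (p i : ℕ) : Prop :=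
  (i = ρ.bitIndex p ∨ ρ.inColliderSectionAt p ∧ i = ρ.bitIndex p + 1) ∧
    (ρ.inColliderSectionAt p → ¬ ρ.SumKnown S (ρ.bitIndex p)) ∧ ¬ ρ.BitKnown S i

end PreGraph.Route

namespace ChainGraph

variable {G : ChainGraph V} {ρ : G.toPreGraph.Route}

lemma undir_and_undir_of_und {a b : V} (h : G.toPreGraph.und a b) :
    G.toPreGraph.undir a b ∧ G.toPreGraph.undir b a :=
  h.elim (fun h => ⟨h, G.undir_symm _ _ h⟩) fun h => ⟨G.undir_symm _ _ h, h⟩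

lemma not_inColliderSectionAt_pred {p q : ℕ} (h : ρ.colliderSectionOcc p q) :
    ¬ ρ.inColliderSectionAt (p - 1) := by
  rintro ⟨p', q', h', hp, hq⟩
  have hs := h.2.2.2.2.1
  have hp1 : p - 1 + 1 = p := Nat.sub_add_cancel h.1
  rcases hq.eq_or_lt with rfl | hlt
  · have := h'.2.2.2.2.2
    rw [hp1] at this
    exact G.solid_not_solid _ _ hs this
  · have := h'.2.2.2.1 (p - 1) hp hlt
    rw [hp1] at this
    exact G.undir_not_solid _ _ (undir_and_undir_of_und this).1 hs

lemma not_inColliderSectionAt_succ {p q : ℕ} (h : ρ.colliderSectionOcc p q) :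
    ¬ ρ.inColliderSectionAt (q + 1) := by
  rintro ⟨p', q', h', hp, hq⟩
  have hs := h.2.2.2.2.2
  rcases hp.eq_or_lt with rfl | hlt
  · exact G.solid_not_solid _ _ hs h'.2.2.2.2.1
  · have := h'.2.2.2.1 q (by omega) (by omega)
    exact G.undir_not_solid _ _ (undir_and_undir_of_und this).2 hs

lemma bitIndex_eq_of_section {p q m : ℕ} (h : ρ.colliderSectionOcc p q) (hp : p ≤ m)
    (hq : m ≤ q) : ρ.bitIndex m = ρ.bitIndex (p - 1) := by
  induction m, hp using Nat.le_induction with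
  | base =>
    obtain ⟨p, rfl⟩ := Nat.exists_eq_add_of_le' h.1
    exact ρ.bitIndex_succ_of_not_end fun h' => not_inColliderSectionAt_pred h h'.1
  | succ m hp ih =>
    rw [ρ.bitIndex_succ_of_not_end fun h' =>
      h'.2 (h.inColliderSectionAt (by omega) hq), ih (by omega)]

lemma bitIndex_section_end {p q : ℕ} (h : ρ.colliderSectionOcc p q) :
    ρ.bitIndex (q + 1) = ρ.bitIndex (p - 1) + 1 := by
  rw [ρ.bitIndex_succ_of_end (h.inColliderSectionAt h.2.1 le_rfl)
    (not_inColliderSectionAt_succ h), bitIndex_eq_of_section h h.2.1 le_rfl]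

/-- A position carrying the sum of the bits adjacent to a collider section lies in it. -/
lemma mem_section_of_bitIndex_eq {p q k : ℕ} (h : ρ.colliderSectionOcc p q)
    (hk : ρ.inColliderSectionAt k) (hb : ρ.bitIndex k = ρ.bitIndex (p - 1)) :
    p ≤ k ∧ k ≤ q := by
  constructor
  · by_contra hlt
    have := ρ.bitIndex_lt hk (not_inColliderSectionAt_pred h) (by omega)
    omega
  · by_contra hlt
    have := ρ.bitIndex_mono (show q + 1 ≤ k by omega)
    rw [bitIndex_section_end h] at this
    omega

lemma not_colliderNodeAt (hG : G.IsLWF) (k : ℕ) : ¬ ρ.colliderNodeAt k := by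
  simp [PreGraph.Route.colliderNodeAt, PreGraph.colliderTriple, hG _ _]

lemma sub_isZOpen (hG : G.IsLWF) {S : Finset V} {p q i j : ℕ} (hpq : p ≤ q) (hq : q ≤ ρ.len)
    (hpi : ρ.Exposes S p i) (hqj : ρ.Exposes S q j) (hij : ρ.Linked S i j) :
    (ρ.sub p q hq).IsZOpen S := by
  obtain ⟨hpi, hpa, hi⟩ := hpi
  obtain ⟨hqj, hqa, hj⟩ := hqj
  have hrange : ∀ k, p ≤ k → k ≤ q → ¬ ρ.inColliderSectionAt k →
      i ≤ ρ.bitIndex k ∧ ρ.bitIndex k ≤ j := by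
    intro k hpk hkq hk
    have h1 := ρ.bitIndex_mono hpk
    have h2 := ρ.bitIndex_mono hkq
    constructor
    · rcases hpi with rfl | ⟨hc, rfl⟩
      · exact h1
      · exact ρ.bitIndex_lt hc hk hpk
    · rcases hqj with rfl | ⟨hc, rfl⟩ <;> omega
  refine ⟨fun k hk => absurd hk (not_colliderNodeAt hG k), fun a c hac => ?_,
    fun k hk _ hks hkS => ?_⟩
  · obtain ⟨ha, hc, h⟩ := (ρ.sub_colliderSectionOcc_iff hq a c).1 hac
    have h1 := hrange (p + a - 1) (by omega) (by have := h.2.1; omega)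
      (not_inColliderSectionAt_pred h)
    have h2 := hrange (p + c + 1) (by omega) (by omega) (not_inColliderSectionAt_succ h)
    rw [bitIndex_section_end h] at h2
    obtain ⟨-, -, k, -, hk, hkb, hkS⟩ := hij (ρ.bitIndex (p + a - 1)) (by omega)
    obtain ⟨h3, h4⟩ := mem_section_of_bitIndex_eq h hk hkb
    refine ⟨k - p, by omega, by omega, ?_⟩
    change ρ.nodes (p + (k - p)) ∈ S
    rwa [Nat.add_sub_cancel' (by omega)]
  · change ρ.nodes (p + k) ∈ S at hkS
    have hkl : k ≤ q - p := hk
    by_cases hc : ρ.inColliderSectionAt (p + k)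
    · obtain ⟨p', q', h, hp', hq'⟩ := id hc
      by_cases hin : p < p' ∧ q' < q
      · refine hks ⟨p' - p, q' - p, (ρ.sub_colliderSectionOcc_iff hq _ _).2
          ⟨by omega, by omega, ?_⟩, by omega, by omega⟩
        rwa [Nat.add_sub_cancel' (by omega), Nat.add_sub_cancel' (by omega)]
      · have hb := bitIndex_eq_of_section h hp' hq'
        by_cases hp : p' ≤ p
        · exact hpa (h.inColliderSectionAt hp (by omega)) ⟨p + k, by omega, hc,
            hb.trans (bitIndex_eq_of_section h hp (by omega)).symm, hkS⟩
        · exact hqa (h.inColliderSectionAt (by omega) (by omega)) ⟨p + k, by omega, hc,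
            hb.trans (bitIndex_eq_of_section h (by omega) (by omega)).symm, hkS⟩
    · have hr := hrange (p + k) (by omega) (by omega) hc
      have hnot : ¬ ρ.BitKnown S (ρ.bitIndex (p + k)) := by
        rcases hr.2.eq_or_lt with he | hlt
        · rwa [he]
        · exact (hij _ (Or.inl ⟨hr.1, hlt⟩)).1
      exact hnot ⟨p + k, by omega, hc, rfl, hkS⟩

lemma not_sep_of_exposes (hG : G.IsLWF) {A B S : Finset V} {p q i j : ℕ}
    (hp : p ≤ ρ.len) (hq : q ≤ ρ.len) (hpA : ρ.nodes p ∈ A) (hqB : ρ.nodes q ∈ B)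
    (hpi : ρ.Exposes S p i) (hqj : ρ.Exposes S q j) (hij : ρ.Linked S i j) :
    ¬ G.toPreGraph.Sep A B S := by
  rw [PreGraph.Sep, not_not]
  rcases le_total p q with h | h
  · refine ⟨ρ.sub p q hq, Or.inl ⟨hpA, ?_⟩, sub_isZOpen hG h hq hpi hqj hij⟩
    change ρ.nodes (p + (q - p)) ∈ B
    rwa [Nat.add_sub_cancel' h]
  · refine ⟨ρ.sub q p hp, Or.inr ⟨hqB, ?_⟩, sub_isZOpen hG h hp hqj hpi hij.symm⟩
    change ρ.nodes (q + (p - q)) ∈ A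
    rwa [Nat.add_sub_cancel' h]

end ChainGraph

namespace PreGraph.Route

variable {G : PreGraph V} (ρ : G.Route)

/-- The bits that `S` links to a bit involved in the signal at a node of `A`. -/
def reach (A S : Finset V) : Set ℕ :=
  {i | ∃ p ≤ ρ.len, ρ.nodes p ∈ A ∧ ∃ j, ρ.Exposes S p j ∧ ρ.Linked S j i}

/-- The `ℕ`-indexed extension by `false` of a finite bit sequence. -/
def extendBits {n : ℕ} (ω : Fin n → Bool) (i : ℕ) : Bool := if h : i < n then ω ⟨i, h⟩ else false

/-- The real vector whose coordinate at `v` encodes the signals at all visits of `ρ` to `v`. -/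
def signalVec (ω : Fin (ρ.len + 2) → Bool) (v : V) : ℝ :=
  (Fintype.equivFin (Fin (ρ.len + 1) → Bool)
    fun k => decide (ρ.nodes k = v) && ρ.signal (extendBits ω) k : ℕ)

lemma marg_signalVec_eq_iff (S : Finset V) (ω ω' : Fin (ρ.len + 2) → Bool) :
    marg S (ρ.signalVec ω) = marg S (ρ.signalVec ω') ↔ ∀ k ≤ ρ.len, ρ.nodes k ∈ S →
      ρ.signal (extendBits ω) k = ρ.signal (extendBits ω') k := by
  simp only [funext_iff, marg, signalVec, Nat.cast_inj, Fin.val_inj,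
    EmbeddingLike.apply_eq_iff_eq]
  constructor
  · intro h k hk hkS
    simpa using h ⟨_, hkS⟩ ⟨k, Nat.lt_succ_of_le hk⟩
  · rintro h ⟨v, hv⟩ k
    by_cases hk : ρ.nodes k = v
    · rw [h k (Nat.le_of_lt_succ k.2) (hk ▸ hv)]
    · simp [hk]

end PreGraph.Route

namespace ChainGraph

variable {G : ChainGraph V} {ρ : G.toPreGraph.Route}

open PreGraph.Route in
lemma signal_mix (hG : G.IsLWF) {A B S : Finset V} (hsep : G.toPreGraph.Sep A B S)
    {ω ω' m : ℕ → Bool}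
    (hS : ∀ k ≤ ρ.len, ρ.nodes k ∈ S → ρ.signal ω k = ρ.signal ω' k)
    (hm : ∀ i ≤ ρ.len + 1, m i = if i ∈ ρ.reach A S then ω i else ω' i) :
    (∀ k ≤ ρ.len, ρ.nodes k ∈ S → ρ.signal m k = ρ.signal ω k) ∧
    (∀ k ≤ ρ.len, ρ.nodes k ∈ A → ρ.signal m k = ρ.signal ω k) ∧
    (∀ k ≤ ρ.len, ρ.nodes k ∈ B → ρ.signal m k = ρ.signal ω' k) := by
  have hbit : ∀ i, ρ.BitKnown S i → ω i = ω' i := by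
    rintro i ⟨k, hk, hc, rfl, hkS⟩
    simpa [signal, hc] using hS k hk hkS
  have hsum : ∀ i, ρ.SumKnown S i → xor (ω i) (ω (i + 1)) = xor (ω' i) (ω' (i + 1)) := by
    rintro i ⟨k, hk, hc, rfl, hkS⟩
    simpa [signal, hc] using hS k hk hkS
  have hmbit : ∀ i ≤ ρ.len + 1, ρ.BitKnown S i → m i = ω i := by
    intro i hi h
    rw [hm i hi, hbit i h, ite_self]
  have hmsum : ∀ i ≤ ρ.len, ρ.SumKnown S i →
      xor (m i) (m (i + 1)) = xor (ω i) (ω (i + 1)) := by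
    intro i hi h
    have hs := hsum i h
    rw [hm i (by omega), hm (i + 1) (by omega)]
    by_cases h0 : ρ.BitKnown S i
    · rw [hbit i h0] at hs ⊢
      rw [Bool.xor_right_inj] at hs
      simp [hs]
    · by_cases h1 : ρ.BitKnown S (i + 1)
      · rw [hbit _ h1] at hs ⊢
        rw [Bool.xor_left_inj] at hs
        simp [hs]
      · have hl := linked_succ h0 h1 h
        have hiff : i ∈ ρ.reach A S ↔ i + 1 ∈ ρ.reach A S :=
          ⟨fun ⟨p, hp, hpA, j, hj, hji⟩ => ⟨p, hp, hpA, j, hj, hji.trans hl⟩,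
            fun ⟨p, hp, hpA, j, hj, hji⟩ => ⟨p, hp, hpA, j, hj, hji.trans hl.symm⟩⟩
        by_cases hi' : i + 1 ∈ ρ.reach A S
        · simp [hiff, hi']
        · simp [hiff, hi', hs]
  have hlen : ∀ k ≤ ρ.len, ρ.bitIndex k ≤ ρ.len := fun k hk => (ρ.bitIndex_le k).trans hk
  refine ⟨fun k hk hkS => ?_, fun k hk hkA => ?_, fun k hk hkB => ?_⟩
  · by_cases hc : ρ.inColliderSectionAt k
    · simpa [signal, hc] using hmsum _ (hlen k hk) ⟨k, hk, hc, rfl, hkS⟩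
    · simpa [signal, hc] using
        hmbit _ ((hlen k hk).trans (Nat.le_succ _)) ⟨k, hk, hc, rfl, hkS⟩
  · have hexp : ∀ i ≤ ρ.len + 1, (¬ ρ.BitKnown S i → ρ.Exposes S k i) → m i = ω i := by
      intro i hi h
      by_cases hb : ρ.BitKnown S i
      · exact hmbit i hi hb
      · rw [hm i hi, if_pos ⟨k, hk, hkA, i, h hb, Linked.refl S i⟩]
    by_cases hc : ρ.inColliderSectionAt k
    · simp only [signal, hc, if_true]
      by_cases hs : ρ.SumKnown S (ρ.bitIndex k)
      · exact hmsum _ (hlen k hk) hs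
      · rw [hexp _ ((hlen k hk).trans (Nat.le_succ _)) fun hb => ⟨Or.inl rfl, fun _ => hs, hb⟩,
          hexp _ (Nat.succ_le_succ (hlen k hk)) fun hb => ⟨Or.inr ⟨hc, rfl⟩, fun _ => hs, hb⟩]
    · simp only [signal, hc, if_false]
      exact hexp _ ((hlen k hk).trans (Nat.le_succ _)) fun hb =>
        ⟨Or.inl rfl, fun h => absurd h hc, hb⟩
  · have hexp : ∀ i ≤ ρ.len + 1, (¬ ρ.BitKnown S i → ρ.Exposes S k i) → m i = ω' i := by
      intro i hi h
      by_cases hb : ρ.BitKnown S i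
      · rw [hmbit i hi hb, hbit i hb]
      · rw [hm i hi, if_neg]
        rintro ⟨p, hp, hpA, j, hj, hji⟩
        exact not_sep_of_exposes hG hp hk hpA hkB hj (h hb) hji hsep
    by_cases hc : ρ.inColliderSectionAt k
    · simp only [signal, hc, if_true]
      by_cases hs : ρ.SumKnown S (ρ.bitIndex k)
      · rw [hmsum _ (hlen k hk) hs, hsum _ hs]
      · rw [hexp _ ((hlen k hk).trans (Nat.le_succ _)) fun hb => ⟨Or.inl rfl, fun _ => hs, hb⟩,
          hexp _ (Nat.succ_le_succ (hlen k hk)) fun hb => ⟨Or.inr ⟨hc, rfl⟩, fun _ => hs, hb⟩]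
    · simp only [signal, hc, if_false]
      exact hexp _ ((hlen k hk).trans (Nat.le_succ _)) fun hb =>
        ⟨Or.inl rfl, fun h => absurd h hc, hb⟩

/-- The law of the signal along a route of an LWF chain graph is globally Markov. -/
lemma measGlobalMarkov_signalVec [Fintype V] [DecidableEq V] (hG : G.IsLWF) :
    measGlobalMarkov G.toPreGraph (uniformLaw ρ.signalVec) := by
  intro A B S _ hsep
  refine mCI_uniformLaw_of_mix _ A B S
    (fun ω ω' i => if (i : ℕ) ∈ ρ.reach A S then ω i else ω' i) ?_ fun ω ω' h => ?_
  · intro ω ω'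
    ext i
    by_cases hi : (i : ℕ) ∈ ρ.reach A S <;> simp [hi]
  · simp only [PreGraph.Route.marg_signalVec_eq_iff] at h ⊢
    refine signal_mix hG hsep h fun i hi => ?_
    simp only [PreGraph.Route.extendBits, dif_pos (show i < ρ.len + 2 by omega)]

lemma not_inColliderSectionAt_zero : ¬ ρ.inColliderSectionAt 0 := by
  rintro ⟨p, q, h, hp, -⟩
  exact absurd h.1 (by omega)

lemma not_inColliderSectionAt_len : ¬ ρ.inColliderSectionAt ρ.len := by
  rintro ⟨p, q, h, -, hq⟩
  exact absurd h.2.2.1 (by omega)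

lemma bit_eq_of_isZOpen {S : Finset V} (hρ : ρ.IsZOpen S) {ω : ℕ → Bool}
    (hω : ∀ k ≤ ρ.len, ρ.nodes k ∈ S → ρ.signal ω k = false) {k : ℕ} (hk : k ≤ ρ.len) :
    ω (ρ.bitIndex k) = ω 0 := by
  induction k with
  | zero => rw [Nat.le_zero.1 (ρ.bitIndex_le 0)]
  | succ k ih =>
    by_cases h : ρ.inColliderSectionAt k ∧ ¬ ρ.inColliderSectionAt (k + 1)
    · rw [ρ.bitIndex_succ_of_end h.1 h.2, ← ih (by omega)]
      obtain ⟨p, q, hpq, hp, hq⟩ := id h.1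
      obtain ⟨m, hm, hm', hmS⟩ := hρ.2.1 p q hpq
      have := hω m (by have := hpq.2.2.1; omega) hmS
      rw [PreGraph.Route.signal, if_pos (hpq.inColliderSectionAt hm hm'),
        bitIndex_eq_of_section hpq hm hm', ← bitIndex_eq_of_section hpq hp hq] at this
      exact (by simpa using this : ω (ρ.bitIndex k) = ω (ρ.bitIndex k + 1)).symm
    · rw [ρ.bitIndex_succ_of_not_end h, ih (by omega)]

/-- The law of the signal along an open route makes the end points conditionally dependent. -/
lemma not_mCI_signalVec [Fintype V] (hG : G.IsLWF) {A B S : Finset V} (hρ : ρ.IsZOpen S)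
    (h0 : ρ.nodes 0 ∈ A) (hn : ρ.nodes ρ.len ∈ B) :
    ¬ mCI (uniformLaw ρ.signalVec) A B S := by
  rw [mCI_uniformLaw_iff]
  intro h
  set zeros : Fin (ρ.len + 2) → Bool := fun _ => false with hz
  set ones : Fin (ρ.len + 2) → Bool := fun _ => true with ho
  have hzero : ∀ k, ρ.signal (PreGraph.Route.extendBits zeros) k = false := by
    simp [PreGraph.Route.signal, PreGraph.Route.extendBits, hz]
  have hone : ∀ i ≤ ρ.len + 1, PreGraph.Route.extendBits ones i = true := fun i hi => by
    simp [PreGraph.Route.extendBits, ho, show i < ρ.len + 2 by omega]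
  have hones : marg S (ρ.signalVec ones) = marg S (ρ.signalVec zeros) := by
    rw [PreGraph.Route.marg_signalVec_eq_iff]
    intro k hk hkS
    have hc : ρ.inColliderSectionAt k := by
      by_contra hc
      exact hρ.2.2 k hk (not_colliderNodeAt hG k) hc hkS
    have := ρ.bitIndex_le k
    rw [hzero, PreGraph.Route.signal, if_pos hc, hone _ (by omega), hone _ (by omega)]
    rfl
  have hprod := h zeros {marg A (ρ.signalVec zeros)} {marg B (ρ.signalVec ones)}
    (measurableSet_singleton _) (measurableSet_singleton _)
  have hempty : {ω | marg S (ρ.signalVec ω) = marg S (ρ.signalVec zeros) ∧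
      marg A (ρ.signalVec ω) ∈ ({marg A (ρ.signalVec zeros)} : Set _) ∧
      marg B (ρ.signalVec ω) ∈ ({marg B (ρ.signalVec ones)} : Set _)} = ∅ := by
    rw [Set.eq_empty_iff_forall_notMem]
    rintro ω ⟨hS, hA, hB⟩
    rw [Set.mem_singleton_iff] at hA hB
    rw [PreGraph.Route.marg_signalVec_eq_iff] at hS hA hB
    have e0 := hA 0 (Nat.zero_le _) h0
    have e1 := hB _ le_rfl hn
    have e := bit_eq_of_isZOpen hρ (ω := PreGraph.Route.extendBits ω)
      (fun k hk hkS => (hS k hk hkS).trans (hzero k)) le_rfl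
    have := ρ.bitIndex_le ρ.len
    rw [hzero, PreGraph.Route.signal, if_neg not_inColliderSectionAt_zero,
      Nat.le_zero.1 (ρ.bitIndex_le 0)] at e0
    rw [PreGraph.Route.signal, PreGraph.Route.signal, if_neg not_inColliderSectionAt_len,
      if_neg not_inColliderSectionAt_len, e, e0, hone _ (by omega)] at e1
    exact Bool.false_ne_true e1
  rw [hempty, Set.ncard_empty, zero_mul, eq_comm, mul_eq_zero] at hprod
  rcases hprod with hprod | hprod <;> rw [Set.ncard_eq_zero (Set.toFinite _)] at hprod
  · exact (Set.eq_empty_iff_forall_notMem.1 hprod zeros) ⟨rfl, rfl⟩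
  · exact (Set.eq_empty_iff_forall_notMem.1 hprod ones) ⟨hones, rfl⟩

/-- Every independence shared by all globally Markov distributions is a separation. -/
lemma sep_of_forall_mCI [Fintype V] [DecidableEq V] (hG : G.IsLWF) {A B S : Finset V}
    (h : ∀ μ : ProbabilityMeasure (V → ℝ), measGlobalMarkov G.toPreGraph (μ : Measure (V → ℝ)) →
      mCI (μ : Measure (V → ℝ)) A B S) :
    G.toPreGraph.Sep A B S := by
  rintro ⟨ρ, hends, hρ⟩
  have hCI : mCI (uniformLaw ρ.signalVec) A B S :=
    h ⟨uniformLaw ρ.signalVec, inferInstance⟩ (measGlobalMarkov_signalVec hG)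
  rcases hends with ⟨h0, hn⟩ | ⟨h0, hn⟩
  · exact not_mCI_signalVec hG hρ h0 hn hCI
  · exact not_mCI_signalVec hG hρ h0 hn (CondIndepFun.symm hCI)

end ChainGraph

/-- **Theorem 1 (LWF case).** Two LWF chain graphs `G` and `H` over the same finite vertex
set are Markov equivalent (the probability distributions on `ℝ^V` satisfying the global
Markov property with respect to `G` are exactly those satisfying it with respect to `H`)
if and only if they represent the same separations. -/
theorem lwf_markov_equivalent_iff_same_separations
    {V : Type*} [Fintype V] [DecidableEq V] (G H : ChainGraph V)
    (hG : G.IsLWF) (hH : H.IsLWF) :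
    ({μ : ProbabilityMeasure (V → ℝ) | measGlobalMarkov G.toPreGraph (↑μ)} =
      {μ : ProbabilityMeasure (V → ℝ) | measGlobalMarkov H.toPreGraph (↑μ)}) ↔
    ∀ X Y Z : Finset V, PDisj X Y Z →
      (G.toPreGraph.Sep X Y Z ↔ H.toPreGraph.Sep X Y Z) := by
  constructor
  · intro h X Y Z hXYZ
    refine ⟨fun hs => H.sep_of_forall_mCI hH fun μ hμ => ?_,
      fun hs => G.sep_of_forall_mCI hG fun μ hμ => ?_⟩
    · have hμ' : μ ∈ {μ : ProbabilityMeasure (V → ℝ) | measGlobalMarkov G.toPreGraph (↑μ)} :=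
        h ▸ hμ
      exact hμ' X Y Z hXYZ hs
    · have hμ' : μ ∈ {μ : ProbabilityMeasure (V → ℝ) | measGlobalMarkov H.toPreGraph (↑μ)} :=
        h ▸ hμ
      exact hμ' X Y Z hXYZ hs
  · intro h
    ext μ
    exact ⟨fun hμ X Y Z hXYZ hs => hμ X Y Z hXYZ ((h X Y Z hXYZ).2 hs),
      fun hμ X Y Z hXYZ hs => hμ X Y Z hXYZ ((h X Y Z hXYZ).1 hs)⟩
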